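/- arXiv:2302.03260 — 3 statements merged into one kernel-verified Lean document; each statement's English description precedes it below -/
import Mathlib

section
/- The group Z₂ × Z₄ has exactly 48 normalized orthomorphisms. -/
/-- The group `ℤ₂ × ℤ₄` (written additively). -/
abbrev G24 : Type := ZMod 2 × ZMod 4

/-- A normalized orthomorphism: a bijection fixing the identity whose associated
complete mapping `x ↦ -x + θ x` (i.e. `x⁻¹θ(x)` in additive notation) is a bijection. -/
def IsNormOrtho (θ : G24 → G24) : Prop :=
  Function.Bijective θ ∧ θ 0 = 0 ∧ Function.Bijective (fun x => -x + θ x)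

/-- Orthogonality of orthomorphisms: `x ↦ θ₁(x)⁻¹θ₂(x)` is a bijection. -/
def Orthogonal (θ₁ θ₂ : G24 → G24) : Prop :=
  Function.Bijective (fun x => -θ₁ x + θ₂ x)

/-- `A i j θ = {x : order of x is i and order of θ(x) is j}`. -/
def A (i j : ℕ) (θ : G24 → G24) : Set G24 :=
  {x | addOrderOf x = i ∧ addOrderOf (θ x) = j}

namespace OrthoCount

/-- Encoding of group elements as numbers below 8. -/
def code (x : G24) : ℕ := 4 * x.1.val + x.2.val

/-- Decoding. -/
def dec (n : ℕ) : G24 := (((n / 4 : ℕ) : ZMod 2), ((n : ℕ) : ZMod 4))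

/-- Subtraction on codes. -/
def d (v k : ℕ) : ℕ := 4 * ((v / 4 + k / 4) % 2) + (v % 4 + 4 - k % 4) % 4

/-- Differences of a partial map, stored as list of values with the most recent first. -/
def ds : List ℕ → List ℕ
  | [] => []
  | v :: l => d v l.length :: ds l

/-- May the partial map `l` be extended by the value `v`? -/
def ok (v : ℕ) (l : List ℕ) : Bool :=
  !(l.contains v) && !((ds l).contains (d v l.length)) && (l.length != 0 || v == 0)

/-- All partial solutions on the first `k` elements. -/
def level : ℕ → List (List ℕ)
  | 0 => [[]]
  | k + 1 => (level k).flatMap fun l => ((List.range 8).filter fun v => ok v l).map (· :: l)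

/-- The partial map sends 0 to 0 (or is empty). -/
def Z (l : List ℕ) : Prop := ∀ h : l ≠ [], l.getLast h = 0

lemma mem_level (k : ℕ) : ∀ l : List ℕ, l ∈ level k ↔
    l.length = k ∧ (∀ v ∈ l, v < 8) ∧ l.Nodup ∧ (ds l).Nodup ∧ Z l := by
  induction k with
  | zero =>
    intro l
    constructor
    · intro h
      simp only [level, List.mem_singleton] at h
      subst h
      simp [ds, Z]
    · rintro ⟨h, -⟩
      simp [level, List.length_eq_zero_iff.1 h]
  | succ k ih =>
    intro l
    cases l with
    | nil => simp [level]
    | cons v l =>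
      have hZ : Z (v :: l) ↔ Z l ∧ (l.length ≠ 0 ∨ v = 0) := by
        cases l <;> simp [Z]
      have h1 : v :: l ∈ level (k + 1) ↔ l ∈ level k ∧ v < 8 ∧ ok v l = true := by
        simp only [level, List.mem_flatMap, List.mem_map, List.mem_filter, List.mem_range]
        constructor
        · rintro ⟨a, ha, w, hw, he⟩
          obtain ⟨rfl, rfl⟩ := List.cons.inj he
          exact ⟨ha, hw⟩
        · rintro ⟨ha, hw⟩
          exact ⟨l, ha, v, hw, rfl⟩
      have h2 : ok v l = true ↔ v ∉ l ∧ d v l.length ∉ ds l ∧ (l.length ≠ 0 ∨ v = 0) := by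
        simp [ok, and_assoc]
      rw [h1, ih, h2, hZ]
      simp only [List.length_cons, List.forall_mem_cons, List.nodup_cons, ds, Nat.add_right_cancel_iff]
      tauto

/-- All elements, in reverse order of code. -/
def elems : List G24 := [dec 7, dec 6, dec 5, dec 4, dec 3, dec 2, dec 1, dec 0]

/-- Encoding of a map as list. -/
def enc (θ : G24 → G24) : List ℕ := elems.map fun x => code (θ x)

lemma mem_elems : ∀ x : G24, x ∈ elems := by decide +kernel

lemma nodup_elems : elems.Nodup := by decide +kernel

lemma code_inj : Function.Injective code := by
  have : ∀ x y : G24, code x = code y → x = y := by decide +kernel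
  exact fun x y => this x y

lemma code_lt : ∀ x : G24, code x < 8 := by decide +kernel

lemma code_dec : ∀ a < 8, code (dec a) = a := by decide +kernel

lemma d_code : ∀ k < 8, ∀ x : G24, d (code x) k = code (-(dec k) + x) := by decide +kernel

lemma nodup_map (f : G24 → G24) :
    (elems.map fun x => code (f x)).Nodup ↔ Function.Bijective f := by
  rw [List.nodup_map_iff_inj_on nodup_elems, ← Finite.injective_iff_bijective]
  constructor
  · intro h x y hxy
    exact h x (mem_elems x) y (mem_elems y) (by simp only [hxy])
  · intro h x _ y _ hxy
    exact h (code_inj hxy)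

lemma ds_enc (θ : G24 → G24) : ds (enc θ) = elems.map fun x => code (-x + θ x) := by
  simp [enc, elems, ds, d_code]

lemma enc_mem (θ : G24 → G24) : enc θ ∈ level 8 ↔ IsNormOrtho θ := by
  have hZ : Z (enc θ) ↔ θ 0 = 0 := by
    have h0 : code 0 = 0 := by decide +kernel
    have h1 : dec 0 = 0 := by decide +kernel
    have : Z (enc θ) ↔ code (θ 0) = code 0 := by
      simp [Z, enc, elems, h0, h1]
    rw [this, code_inj.eq_iff]
  have hlen : (enc θ).length = 8 := by simp [enc, elems]
  have hlt : ∀ v ∈ enc θ, v < 8 := by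
    intro v hv
    obtain ⟨x, -, rfl⟩ := List.mem_map.1 hv
    exact code_lt _
  rw [mem_level, hZ, ds_enc, nodup_map, enc, nodup_map, IsNormOrtho]
  change _ = _ ∧ (∀ v ∈ enc θ, v < 8) ∧ _ ↔ _
  simp only [enc] at hlen
  tauto

lemma enc_inj : Function.Injective enc := by
  intro f g h
  funext x
  exact code_inj (List.map_inj_left.1 h x (mem_elems x))

lemma enc_surj (l : List ℕ) (hl : l.length = 8) (h : ∀ v ∈ l, v < 8) : ∃ θ, enc θ = l := by
  refine ⟨fun x => dec (l.getD (7 - code x) 0), ?_⟩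
  match l, hl with
  | [a, b, c, e, f, g, i, j], _ =>
    simp only [List.forall_mem_cons] at h
    simp [enc, elems, code_dec, h]

lemma level_length : (level 8).length = 48 := by decide +kernel

lemma level_nodup : (level 8).Nodup := by decide +kernel

end OrthoCount

open OrthoCount in
theorem card_orth_Z2xZ4 : {θ : G24 → G24 | IsNormOrtho θ}.ncard = 48 := by
  rw [← Set.ncard_image_of_injective _ enc_inj]
  have : Set.image enc {θ : G24 → G24 | IsNormOrtho θ} = ((level 8).toFinset : Set (List ℕ)) := by
    ext l
    simp only [Set.mem_image, Set.mem_ofPred_eq, List.coe_toFinset]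
    constructor
    · rintro ⟨θ, hθ, rfl⟩
      exact (enc_mem θ).2 hθ
    · intro h
      have h' := (mem_level 8 l).1 h
      obtain ⟨θ, rfl⟩ := enc_surj l h'.1 h'.2.1
      exact ⟨θ, (enc_mem θ).1 h, rfl⟩
  rw [this, Set.ncard_coe_finset, List.toFinset_card_of_nodup level_nodup, level_length]
end

section
/- Let G = Z₂ × Z₄ and θ₁, θ₂ normalized orthomorphisms of G. If θ₁ and θ₂ are orthogonal, then A₄₄ and A₄₄′ are disjoint, where A₄₄ (resp. A₄₄′) is the set of order-4 elements whose image under θ₁ (resp. θ₂) has order 4. -/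
/-- Numerical code of an element of `ℤ₂ × ℤ₄`. -/
def gcode (x : G24) : ℕ := 4 * x.1.val + x.2.val

/-- The element with a given code. -/
def gdec (n : ℕ) : G24 := ((n / 4 : ℕ), (n % 4 : ℕ))

/-- Subtraction `-x + y` on codes. -/
def csub (x y : ℕ) : ℕ := 4 * ((x / 4 + y / 4) % 2) + (y % 4 + 4 - x % 4) % 4

/-- One step of the exhaustive search; a partial solution is a list of pairs
(value, difference). -/
def stepS (x : ℕ) (L : List (List (ℕ × ℕ))) : List (List (ℕ × ℕ)) :=
  L.flatMap fun l => ((List.range 8).filter fun a =>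
    l.all fun p => (!(p.1 == a)) && (!(p.2 == (csub x a)))).map fun a => (a, csub x a) :: l

/-- All normalized orthomorphisms, in coded form. -/
def allS : List (List (ℕ × ℕ)) :=
  stepS 7 (stepS 6 (stepS 5 (stepS 4 (stepS 3 (stepS 2 (stepS 1 [[(0, 0)]]))))))

/-- Boolean test for absence of duplicates. -/
def nodupB : List ℕ → Bool
  | [] => true
  | a :: l => (l.all fun b => !(b == a)) && nodupB l

/-- The two coded maps are not orthogonal, or have no common order-4 to order-4 element. -/
def goodB (l m : List (ℕ × ℕ)) : Bool :=
  (!nodupB (List.zipWith (fun p q => csub p.1 q.1) l m)) ||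
    ((List.zipWith (fun p q => (((p.1 % 2) * (q.1 % 2)) == 0)) l m).zipIdx).all
      fun r => r.1 || ((r.2 % 2) == 1)

theorem goodB_all : (allS.all fun l => allS.all fun m => goodB l m) = true := by
  decide +kernel

theorem gcode_lt (x : G24) : gcode x < 8 := by revert x; decide

theorem gcode_inj {x y : G24} (h : gcode x = gcode y) : x = y := by revert x y; decide

theorem gcode_sub (x y : G24) : gcode (-x + y) = csub (gcode x) (gcode y) := by
  revert x y; decide

theorem gcode_dec (n : ℕ) (h : n < 8) : gcode (gdec n) = n := by
  revert n; decide

theorem order_four_odd (x : G24) (h : addOrderOf x = 4) : gcode x % 2 = 1 := by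
  by_contra hc
  have h2 : (2 : ℕ) • x = 0 := by
    clear h; revert x; decide
  have := addOrderOf_dvd_of_nsmul_eq_zero h2
  rw [h] at this
  omega

theorem nodupB_of {l : List ℕ} (h : l.Nodup) : nodupB l = true := by
  induction l with
  | nil => rfl
  | cons a l ih =>
    rw [List.nodup_cons] at h
    simp only [nodupB, Bool.and_eq_true, List.all_eq_true]
    refine ⟨fun b hb => ?_, ih h.2⟩
    have : b ≠ a := fun hh => h.1 (hh ▸ hb)
    simpa using this

/-- Coded value list of `θ` on the elements with codes in `l`. -/
def enc (θ : G24 → G24) (l : List ℕ) : List (ℕ × ℕ) :=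
  l.map fun n => (gcode (θ (gdec n)), csub n (gcode (θ (gdec n))))

theorem gdec_inj {m n : ℕ} (hm : m < 8) (hn : n < 8) (h : gdec m = gdec n) : m = n := by
  rw [← gcode_dec m hm, h, gcode_dec n hn]

theorem step_mem (θ : G24 → G24) (hθ : IsNormOrtho θ) (x : ℕ) (l : List ℕ)
    (L : List (List (ℕ × ℕ))) (hL : enc θ l ∈ L) (hx : x < 8)
    (hl : ∀ n ∈ l, n < 8 ∧ n ≠ x) : enc θ (x :: l) ∈ stepS x L := by
  unfold stepS
  rw [List.mem_flatMap]
  refine ⟨enc θ l, hL, ?_⟩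
  rw [List.mem_map]
  refine ⟨gcode (θ (gdec x)), ?_, rfl⟩
  rw [List.mem_filter]
  refine ⟨List.mem_range.2 (gcode_lt _), ?_⟩
  rw [List.all_eq_true]
  intro p hp
  obtain ⟨n, hn, rfl⟩ := List.mem_map.1 hp
  obtain ⟨h8, hne⟩ := hl n hn
  have h1 : gcode (θ (gdec n)) ≠ gcode (θ (gdec x)) := fun h =>
    hne (gdec_inj h8 hx (hθ.1.1 (gcode_inj h)))
  have h2 : csub n (gcode (θ (gdec n))) ≠ csub x (gcode (θ (gdec x))) := by
    intro h
    have e : ∀ k < 8, csub k (gcode (θ (gdec k))) = gcode (-gdec k + θ (gdec k)) := by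
      intro k hk
      rw [gcode_sub, gcode_dec k hk]
    rw [e n h8, e x hx] at h
    exact hne (gdec_inj h8 hx (hθ.2.2.1 (gcode_inj h)))
  simp [h1, h2]

theorem enc_mem (θ : G24 → G24) (hθ : IsNormOrtho θ) :
    enc θ [7, 6, 5, 4, 3, 2, 1, 0] ∈ allS := by
  unfold allS
  iterate 7
    refine step_mem θ hθ _ _ _ ?_ (by norm_num) (by decide)
  have h0 : gdec 0 = 0 := by decide
  simp [enc, h0, hθ.2.1, gcode, csub]

theorem A44_disjoint_of_orth (θ₁ θ₂ : G24 → G24)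
    (h₁ : IsNormOrtho θ₁) (h₂ : IsNormOrtho θ₂)
    (h : Orthogonal θ₁ θ₂) : Disjoint (A 4 4 θ₁) (A 4 4 θ₂) := by
  rw [Set.disjoint_left]
  rintro x ⟨hx, hx1⟩ ⟨-, hx2⟩
  have hg := goodB_all
  rw [List.all_eq_true] at hg
  have hg := hg _ (enc_mem θ₁ h₁)
  rw [List.all_eq_true] at hg
  have hg := hg _ (enc_mem θ₂ h₂)
  have hnd : nodupB (List.zipWith (fun p q => csub p.1 q.1)
      (enc θ₁ [7, 6, 5, 4, 3, 2, 1, 0]) (enc θ₂ [7, 6, 5, 4, 3, 2, 1, 0])) = true := by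
    apply nodupB_of
    have : List.zipWith (fun p q => csub p.1 q.1)
      (enc θ₁ [7, 6, 5, 4, 3, 2, 1, 0]) (enc θ₂ [7, 6, 5, 4, 3, 2, 1, 0]) =
      [7, 6, 5, 4, 3, 2, 1, 0].map fun n => gcode (-θ₁ (gdec n) + θ₂ (gdec n)) := by
      simp [enc, gcode_sub]
    rw [this]
    refine List.Nodup.map_on ?_ (by decide)
    intro a ha b hb hab
    have h8 : ∀ n ∈ [7, 6, 5, 4, 3, 2, 1, 0], n < 8 := by decide
    exact gdec_inj (h8 a ha) (h8 b hb) (h.1 (gcode_inj hab))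
  have o := order_four_odd _ hx
  have o1 := order_four_odd _ hx1
  have o2 := order_four_odd _ hx2
  have hxd : x = gdec (gcode x) := gcode_inj (gcode_dec _ (gcode_lt x)).symm
  have hlt := gcode_lt x
  rw [goodB, hnd] at hg
  generalize gcode x = n at *
  subst hxd
  simp [enc] at hg
  interval_cases n <;> simp_all
end

section
/- The orthomorphism graph of Z₂ × Z₄ is a disjoint union of 12 cycles of length 4; in particular it is 2-regular with 48 vertices and contains no triangles. -/
namespace OrthoAux

/-- Code of a group element as a natural number below 8. -/
def E (x : G24) : ℕ := 4 * x.1.val + x.2.val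

/-- Inverse of `E`. -/
def D (n : ℕ) : G24 := ((n / 4 : ℕ), (n % 4 : ℕ))

/-- Subtraction on codes. -/
def sub (x y : ℕ) : ℕ := ((x / 4 + y / 4) % 2) * 4 + (x % 4 + 4 - y % 4) % 4

def idl : List ℕ := [0, 1, 2, 3, 4, 5, 6, 7]

/-- Boolean test for distinct entries. -/
def nd : List ℕ → Bool
  | [] => true
  | a :: l => !(l.elem a) && nd l

theorem nd_iff (l : List ℕ) : nd l = true ↔ l.Nodup := by
  induction l with
  | nil => simp [nd]
  | cons a l ih => simp [nd, ih]

def enc (θ : G24 → G24) : List ℕ := idl.map (fun i => E (θ (D i)))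

def dec (l : List ℕ) : G24 → G24 := fun x => D (l.getD (E x) 0)

theorem D_E : ∀ x : G24, D (E x) = x := by decide
theorem E_mem : ∀ x : G24, E x ∈ idl := by decide
theorem E_D : ∀ n ∈ idl, E (D n) = n := by decide
theorem E_sub : ∀ x y : G24, E (-x + y) = sub (E y) (E x) := by decide
theorem E_inj : Function.Injective E := Function.LeftInverse.injective D_E

theorem enc_inj : Function.Injective enc := by
  intro θ ψ h
  funext x
  have h1 := List.map_inj_left.1 h (E x) (E_mem x)
  simp only [D_E] at h1
  exact E_inj h1

theorem bij_iff (f : G24 → G24) : Function.Bijective f ↔ nd (enc f) = true := by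
  rw [nd_iff, ← Finite.injective_iff_bijective, enc, List.nodup_map_iff_inj_on (by decide)]
  constructor
  · intro h a ha b hb hab
    have := congrArg E (h (E_inj hab))
    rwa [E_D a ha, E_D b hb] at this
  · intro h x y hxy
    apply E_inj
    apply h _ (E_mem x) _ (E_mem y)
    simp only [D_E, hxy]

theorem enc_diff (f g : G24 → G24) :
    enc (fun x => -f x + g x) = List.zipWith sub (enc g) (enc f) := by
  simp [enc, idl, E_sub]

theorem enc_id : enc (fun x => x) = idl := by decide

def orth (l m : List ℕ) : Bool := nd (List.zipWith sub m l)

theorem orth_iff (f g : G24 → G24) : Orthogonal f g ↔ orth (enc f) (enc g) = true := by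
  rw [Orthogonal, bij_iff, enc_diff, orth]

/-- Prefix-closed validity test. -/
def valid (l : List ℕ) : Bool := nd l && (l.headD 0 == 0) && nd (List.zipWith sub l idl)

theorem norm_iff (f : G24 → G24) : IsNormOrtho f ↔ valid (enc f) = true := by
  have h := enc_diff (fun x => x) f
  rw [enc_id] at h
  have h0 : f 0 = 0 ↔ (enc f).headD 0 = 0 := by
    have : (enc f).headD 0 = E (f (D 0)) := rfl
    rw [this]
    have hD : D 0 = 0 := by decide
    have hE : E 0 = 0 := by decide
    rw [hD]
    exact ⟨fun h => by rw [h, hE], fun h => E_inj (by rw [h, hE])⟩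
  rw [IsNormOrtho, bij_iff, bij_iff, h, h0]
  simp [valid, and_assoc]

theorem valid_take (l : List ℕ) (k : ℕ) (h : valid l = true) : valid (l.take k) = true := by
  simp only [valid, Bool.and_eq_true, nd_iff, beq_iff_eq] at h ⊢
  obtain ⟨⟨h1, h2⟩, h3⟩ := h
  refine ⟨⟨h1.sublist (List.take_sublist _ _), ?_⟩, ?_⟩
  · cases l <;> cases k <;> simp_all
  · have h4 := h3.sublist (List.take_sublist k _)
    rw [List.take_zipWith] at h4
    have h5 : List.zipWith sub (l.take k) idl
        = List.zipWith sub (l.take k) (idl.take k) := by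
      apply List.ext_getElem?
      intro i
      simp only [List.getElem?_zipWith, List.getElem?_take]
      split_ifs <;> simp
    rw [h5]
    exact h4

/-- Backtracking search. -/
def search : ℕ → List (List ℕ)
  | 0 => [[]]
  | k + 1 => ((search k).flatMap fun l => idl.map fun v => l ++ [v]).filter valid

theorem search_complete (l : List ℕ) (hv : valid l = true) (hm : ∀ a ∈ l, a ∈ idl) (k : ℕ)
    (hk : k ≤ l.length) : l.take k ∈ search k := by
  induction k with
  | zero => simp [search]
  | succ k ih =>
    have ih := ih (by omega)
    rw [search, List.mem_filter]
    refine ⟨?_, valid_take _ _ hv⟩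
    rw [List.mem_flatMap]
    refine ⟨_, ih, ?_⟩
    rw [List.mem_map]
    exact ⟨l[k], hm _ (List.getElem_mem _), by simp⟩

/-- The 48 normalized orthomorphisms. -/
def L : List (List ℕ) :=
  [[0, 2, 4, 6, 1, 7, 5, 3], [0, 2, 4, 6, 7, 1, 3, 5], [0, 2, 5, 7, 1, 3, 4, 6],
   [0, 2, 5, 7, 6, 4, 3, 1], [0, 2, 6, 4, 3, 7, 5, 1], [0, 2, 6, 4, 7, 3, 1, 5],
   [0, 2, 7, 5, 3, 1, 4, 6], [0, 2, 7, 5, 6, 4, 1, 3], [0, 3, 4, 7, 1, 6, 5, 2],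
   [0, 3, 4, 7, 5, 2, 1, 6], [0, 3, 5, 4, 2, 1, 7, 6], [0, 3, 5, 4, 7, 6, 2, 1],
   [0, 3, 6, 5, 1, 4, 7, 2], [0, 3, 6, 5, 7, 2, 1, 4], [0, 3, 7, 6, 2, 1, 5, 4],
   [0, 3, 7, 6, 5, 4, 2, 1], [0, 4, 1, 5, 6, 2, 7, 3], [0, 4, 1, 7, 2, 6, 3, 5],
   [0, 4, 3, 5, 1, 7, 2, 6], [0, 4, 3, 7, 6, 2, 5, 1], [0, 4, 6, 2, 1, 3, 7, 5],
   [0, 4, 6, 2, 5, 7, 3, 1], [0, 4, 7, 1, 2, 6, 5, 3], [0, 4, 7, 1, 5, 3, 2, 6],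
   [0, 5, 1, 4, 6, 3, 7, 2], [0, 5, 1, 6, 2, 7, 3, 4], [0, 5, 3, 4, 2, 7, 1, 6],
   [0, 5, 3, 6, 7, 2, 4, 1], [0, 5, 4, 1, 3, 2, 7, 6], [0, 5, 4, 1, 7, 6, 3, 2],
   [0, 5, 7, 2, 3, 6, 4, 1], [0, 5, 7, 2, 6, 3, 1, 4], [0, 6, 1, 5, 3, 7, 2, 4],
   [0, 6, 1, 7, 5, 3, 4, 2], [0, 6, 3, 5, 7, 1, 4, 2], [0, 6, 3, 7, 2, 4, 1, 5],
   [0, 6, 4, 2, 3, 1, 7, 5], [0, 6, 4, 2, 5, 7, 1, 3], [0, 6, 5, 1, 2, 4, 7, 3],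
   [0, 6, 5, 1, 7, 3, 2, 4], [0, 7, 1, 4, 3, 6, 2, 5], [0, 7, 1, 6, 5, 2, 4, 3],
   [0, 7, 3, 4, 6, 1, 5, 2], [0, 7, 3, 6, 1, 4, 2, 5], [0, 7, 5, 2, 1, 6, 4, 3],
   [0, 7, 5, 2, 6, 1, 3, 4], [0, 7, 6, 1, 3, 2, 5, 4], [0, 7, 6, 1, 5, 4, 3, 2]]

theorem search_eq : search 8 = L := by decide +kernel

theorem L_valid : ∀ l ∈ L, valid l = true := by decide +kernel

theorem L_dec : ∀ l ∈ L, enc (dec l) = l := by decide +kernel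

theorem norm_iff_mem (f : G24 → G24) : IsNormOrtho f ↔ enc f ∈ L := by
  rw [norm_iff]
  constructor
  · intro h
    have := search_complete (enc f) h (by
      intro a ha
      obtain ⟨i, -, rfl⟩ := List.mem_map.1 ha
      exact E_mem _) 8 (by simp [enc, idl])
    rw [search_eq, List.take_of_length_le (by simp [enc, idl])] at this
    exact this
  · exact L_valid _

theorem ncard_eq (S : List (List ℕ)) (hS : S.Nodup) (hL : ∀ l ∈ S, l ∈ L) :
    {θ : G24 → G24 | enc θ ∈ S}.ncard = S.length := by
  rw [← Set.ncard_image_of_injective _ enc_inj, ← List.toFinset_card_of_nodup hS,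
    ← Set.ncard_coe_finset]
  congr 1
  ext l
  simp only [Set.mem_image, Set.mem_ofPred_eq, List.coe_toFinset]
  constructor
  · rintro ⟨θ, h, rfl⟩
    exact h
  · intro h
    have := L_dec l (hL l h)
    exact ⟨dec l, by rwa [this], this⟩

def nbr (l : List ℕ) : List (List ℕ) := L.filter (orth l)

/-- The component of `l`: its neighbours and the neighbours of the first of them. -/
def comp (l : List ℕ) : List (List ℕ) := nbr l ++ nbr ((nbr l).headD [])

theorem mem_nbr (f g : G24 → G24) : IsNormOrtho g ∧ Orthogonal f g ↔ enc g ∈ nbr (enc f) := by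
  rw [norm_iff_mem, orth_iff, nbr, List.mem_filter]

theorem L_nodup : L.Nodup := by decide +kernel
theorem L_nbr : ∀ l ∈ L, (nbr l).length = 2 := by decide +kernel
theorem L_tri : ∀ l ∈ L, ∀ m ∈ nbr l, ∀ n ∈ nbr m, orth l n = false := by decide +kernel
theorem L_comp : ∀ l ∈ L, (comp l).Nodup ∧ (comp l).length = 4 ∧ l ∈ comp l ∧
    (nbr l).headD [] ∈ nbr l ∧ ∀ m ∈ comp l, ∀ n ∈ nbr m, n ∈ comp l := by decide +kernel

theorem nbr_sub (l : List ℕ) : ∀ m ∈ nbr l, m ∈ L := fun _ h => (List.mem_filter.1 h).1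

theorem comp_sub (l : List ℕ) : ∀ m ∈ comp l, m ∈ L := by
  intro m h
  rcases List.mem_append.1 h with h | h <;> exact nbr_sub _ _ h

theorem reach_iff (θ : G24 → G24) (hθ : IsNormOrtho θ) (ψ : G24 → G24) :
    (IsNormOrtho ψ ∧ Relation.ReflTransGen
      (fun f g => IsNormOrtho f ∧ IsNormOrtho g ∧ Orthogonal f g) θ ψ) ↔
    enc ψ ∈ comp (enc θ) := by
  obtain ⟨-, -, hself, hhead, hcl⟩ := L_comp _ ((norm_iff_mem θ).1 hθ)
  constructor
  · rintro ⟨-, h⟩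
    induction h with
    | refl => exact hself
    | tail _ hstep ih => exact hcl _ ih _ ((mem_nbr _ _).1 hstep.2)
  · intro h
    refine ⟨(norm_iff_mem ψ).2 (comp_sub _ _ h), ?_⟩
    rcases List.mem_append.1 h with h | h
    · exact .single ⟨hθ, (mem_nbr _ _).2 h⟩
    · have he := L_dec _ (nbr_sub _ _ hhead)
      rw [← he] at hhead h
      have h1 := (mem_nbr _ _).2 hhead
      exact .tail (.single ⟨hθ, h1⟩) ⟨h1.1, (mem_nbr _ _).2 h⟩

end OrthoAux

/-- The orthomorphism graph of `ℤ₂ × ℤ₄` is a disjoint union of 12 cycles of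
length 4: it has 48 vertices, is 2-regular, is triangle-free, and every
connected component (under the reflexive-transitive closure of orthogonality
among orthomorphisms) has exactly 4 vertices. -/
theorem ortho_graph_structure :
    {θ : G24 → G24 | IsNormOrtho θ}.ncard = 48 ∧
    (∀ θ : G24 → G24, IsNormOrtho θ →
      {ψ : G24 → G24 | IsNormOrtho ψ ∧ Orthogonal θ ψ}.ncard = 2) ∧
    (¬ ∃ θ₁ θ₂ θ₃ : G24 → G24, IsNormOrtho θ₁ ∧ IsNormOrtho θ₂ ∧ IsNormOrtho θ₃ ∧
        Orthogonal θ₁ θ₂ ∧ Orthogonal θ₂ θ₃ ∧ Orthogonal θ₁ θ₃) ∧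
    (∀ θ : G24 → G24, IsNormOrtho θ →
      {ψ : G24 → G24 | IsNormOrtho ψ ∧
        Relation.ReflTransGen
          (fun f g => IsNormOrtho f ∧ IsNormOrtho g ∧ Orthogonal f g) θ ψ}.ncard = 4) := by
  refine ⟨?_, ?_, ?_, ?_⟩
  · simp only [OrthoAux.norm_iff_mem]
    rw [OrthoAux.ncard_eq _ OrthoAux.L_nodup (fun _ h => h)]
    rfl
  · intro θ hθ
    simp only [OrthoAux.mem_nbr]
    rw [OrthoAux.ncard_eq (OrthoAux.nbr (OrthoAux.enc θ)) (OrthoAux.L_nodup.filter _) (OrthoAux.nbr_sub _)]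
    exact OrthoAux.L_nbr _ ((OrthoAux.norm_iff_mem θ).1 hθ)
  · rintro ⟨f, g, h, hf, hg, hh, hfg, hgh, hfh⟩
    have h1 := OrthoAux.L_tri _ ((OrthoAux.norm_iff_mem f).1 hf) _
      ((OrthoAux.mem_nbr f g).1 ⟨hg, hfg⟩) _ ((OrthoAux.mem_nbr g h).1 ⟨hh, hgh⟩)
    rw [(OrthoAux.orth_iff f h).1 hfh] at h1
    exact absurd h1 (by decide)
  · intro θ hθ
    simp only [OrthoAux.reach_iff θ hθ]
    have hc := OrthoAux.L_comp _ ((OrthoAux.norm_iff_mem θ).1 hθ)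
    rw [OrthoAux.ncard_eq _ hc.1 (OrthoAux.comp_sub _)]
    exact hc.2.1
end
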